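/- arXiv:1802.01139 — 3 statements merged into one kernel-verified Lean document; each statement's English description precedes it below -/
import Mathlib

section
/- For every ε > 0 and every K ∈ ℕ, there exists an integer N > K such that 1 − R_{n,k} ≤ ε for all n ≥ N and all k ≤ K; in particular, for every fixed k ∈ ℕ one has lim_{n→∞} R_{n,k} = 1. -/
/-!
`S n k` is the `k`-th elementary symmetric function of the row lengths `l n i`, which are
between `1` and `n` and add up to `n ^ 2`. Extending a `k`-set of heights by one further height
gives (`succ_mul_sameHeightFree`)
`(k + 1) S_{k+1} = ∑_{|s| = k} (∏_{i ∈ s} l_i) (n ^ 2 - ∑_{i ∈ s} l_i)`,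
and `k ≤ ∑_{i ∈ s} l_i ≤ k n`, so `(k + 1) S_{k+1}` lies between `(n ^ 2 - k n) S_k` and
`(n ^ 2 - k) S_k`. Since `(k + 1) C(n ^ 2, k + 1) = (n ^ 2 - k) C(n ^ 2, k)`, this yields
`(1 - k / n) R_k ≤ R_{k+1} ≤ R_k` for `n > k`, and `R_k → 1` follows by induction on `k`.
The uniform bound over `k ≤ K` is a finite intersection of eventual statements.
-/

/-- `l n i` is the number of blocks at height `i` in an `n × n` grid tilted by 45°:
`l n i = i` for `1 ≤ i ≤ n` and `l n i = 2n - i` for `n < i ≤ 2n - 1`. -/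
def tiltedHeight (n i : ℕ) : ℕ := if i ≤ n then i else 2 * n - i

/-- `S n k` is the number of configurations of `k` blocks in the tilted `n × n` grid with
no two blocks at the same height, i.e. the sum over strictly increasing tuples
`2n-1 ≥ i_k > ⋯ > i_1 ≥ 1` of the products `l n i_1 ⋯ l n i_k`. -/
def sameHeightFree (n k : ℕ) : ℕ :=
  ∑ s ∈ (Finset.Icc 1 (2 * n - 1)).powersetCard k, ∏ i ∈ s, tiltedHeight n i

/-- `R n k = S_{n,k} / C(n², k)`, the ratio of the number of `k`-block configurations with
no two blocks at the same height to the total number of `k`-block configurations. -/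
noncomputable def ratioR (n k : ℕ) : ℝ :=
  (sameHeightFree n k : ℝ) / ((n ^ 2).choose k : ℝ)

/-- Double counting of pairs `i ∈ t` with `t` a `(k + 1)`-subset of `A`, by sending `(t, i)` to
`(t \ {i}, i)`. -/
lemma succ_mul_sum_powersetCard (A : Finset ℕ) (f : ℕ → ℕ) (k : ℕ) :
    (k + 1) * ∑ t ∈ A.powersetCard (k + 1), ∏ i ∈ t, f i =
      ∑ s ∈ A.powersetCard k, (∏ i ∈ s, f i) * ∑ i ∈ A \ s, f i := by
  have h1 : (k + 1) * ∑ t ∈ A.powersetCard (k + 1), ∏ i ∈ t, f i =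
      ∑ t ∈ A.powersetCard (k + 1), ∑ _j ∈ t, ∏ i ∈ t, f i := by
    rw [Finset.mul_sum]
    refine Finset.sum_congr rfl fun t ht => ?_
    rw [Finset.sum_const, (Finset.mem_powersetCard.1 ht).2, smul_eq_mul]
  simp_rw [h1, Finset.mul_sum]
  rw [Finset.sum_sigma', Finset.sum_sigma']
  refine Finset.sum_bij' (fun x _ => ⟨x.1.erase x.2, x.2⟩) (fun x _ => ⟨insert x.2 x.1, x.2⟩)
    ?_ ?_ ?_ ?_ ?_
  · rintro ⟨t, j⟩ h
    simp only [Finset.mem_sigma, Finset.mem_powersetCard, Finset.mem_sdiff] at h ⊢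
    obtain ⟨⟨hA, hc⟩, hj⟩ := h
    refine ⟨⟨(Finset.erase_subset _ _).trans hA, ?_⟩, hA hj, Finset.notMem_erase _ _⟩
    rw [Finset.card_erase_of_mem hj, hc, Nat.add_sub_cancel]
  · rintro ⟨s, j⟩ h
    simp only [Finset.mem_sigma, Finset.mem_powersetCard, Finset.mem_sdiff] at h ⊢
    obtain ⟨⟨hA, hc⟩, hj, hjs⟩ := h
    refine ⟨⟨Finset.insert_subset hj hA, ?_⟩, Finset.mem_insert_self _ _⟩
    rw [Finset.card_insert_of_notMem hjs, hc]
  · rintro ⟨t, j⟩ h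
    simp only [Finset.mem_sigma] at h
    simp [Finset.insert_erase h.2]
  · rintro ⟨s, j⟩ h
    simp only [Finset.mem_sigma, Finset.mem_sdiff] at h
    simp [Finset.erase_insert h.2.2]
  · rintro ⟨t, j⟩ h
    simp only [Finset.mem_sigma] at h
    exact (Finset.prod_erase_mul _ _ h.2).symm

lemma tiltedHeight_le (n i : ℕ) : tiltedHeight n i ≤ n := by
  unfold tiltedHeight; split_ifs <;> omega

lemma one_le_tiltedHeight {n i : ℕ} (h : i ∈ Finset.Icc 1 (2 * n - 1)) :
    1 ≤ tiltedHeight n i := by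
  rw [Finset.mem_Icc] at h
  unfold tiltedHeight; split_ifs <;> omega

/-- The grid has `n ^ 2` blocks: heights `i` and `n + i` together carry `n` blocks for each
`0 ≤ i < n` (height `0` carries none). -/
lemma sum_tiltedHeight (n : ℕ) :
    ∑ i ∈ Finset.Icc 1 (2 * n - 1), tiltedHeight n i = n ^ 2 := by
  have h0 : ∑ i ∈ Finset.Icc 1 (2 * n - 1), tiltedHeight n i =
      ∑ i ∈ Finset.range (n + n), tiltedHeight n i := by
    refine Finset.sum_subset (fun i hi => ?_) fun i hi hi' => ?_
    · simp only [Finset.mem_Icc, Finset.mem_range] at *; omega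
    · simp only [Finset.mem_Icc, Finset.mem_range] at *
      have : i = 0 := by omega
      simp [this, tiltedHeight]
  rw [h0, Finset.sum_range_add, ← Finset.sum_add_distrib]
  have h1 : ∀ i ∈ Finset.range n, tiltedHeight n i + tiltedHeight n (n + i) = n := by
    intro i hi
    rw [Finset.mem_range] at hi
    unfold tiltedHeight; split_ifs <;> omega
  rw [Finset.sum_congr rfl h1]
  simp [sq]

lemma succ_mul_sameHeightFree (n k : ℕ) :
    ((k : ℝ) + 1) * sameHeightFree n (k + 1) =
      ∑ s ∈ (Finset.Icc 1 (2 * n - 1)).powersetCard k,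
        (∏ i ∈ s, (tiltedHeight n i : ℝ)) * ((n : ℝ) ^ 2 - ∑ i ∈ s, (tiltedHeight n i : ℝ)) := by
  have h := congrArg (Nat.cast : ℕ → ℝ)
    (succ_mul_sum_powersetCard (Finset.Icc 1 (2 * n - 1)) (tiltedHeight n) k)
  push_cast at h
  unfold sameHeightFree
  push_cast
  rw [h]
  refine Finset.sum_congr rfl fun s hs => ?_
  have h2 := Finset.sum_sdiff (f := tiltedHeight n) (Finset.mem_powersetCard.1 hs).1
  rw [sum_tiltedHeight] at h2
  have h3 := congrArg (Nat.cast : ℕ → ℝ) h2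
  push_cast at h3
  rw [← h3, add_sub_cancel_right]

lemma sameHeightFree_succ_le (n k : ℕ) :
    ((k : ℝ) + 1) * sameHeightFree n (k + 1) ≤ ((n : ℝ) ^ 2 - k) * sameHeightFree n k := by
  rw [succ_mul_sameHeightFree, sameHeightFree, mul_comm (_ - _)]
  push_cast
  rw [Finset.sum_mul]
  refine Finset.sum_le_sum fun s hs => ?_
  obtain ⟨hA, hc⟩ := Finset.mem_powersetCard.1 hs
  have h := Finset.card_nsmul_le_sum s (tiltedHeight n) 1 fun i hi => one_le_tiltedHeight (hA hi)
  rw [hc, smul_eq_mul, mul_one] at h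
  have h' : (k : ℝ) ≤ ∑ i ∈ s, (tiltedHeight n i : ℝ) := by exact_mod_cast h
  gcongr

lemma le_sameHeightFree_succ (n k : ℕ) :
    ((n : ℝ) ^ 2 - k * n) * sameHeightFree n k ≤ ((k : ℝ) + 1) * sameHeightFree n (k + 1) := by
  rw [succ_mul_sameHeightFree, sameHeightFree, mul_comm (_ - _)]
  push_cast
  rw [Finset.sum_mul]
  refine Finset.sum_le_sum fun s hs => ?_
  obtain ⟨hA, hc⟩ := Finset.mem_powersetCard.1 hs
  have h := Finset.sum_le_card_nsmul s (tiltedHeight n) n fun i _ => tiltedHeight_le n i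
  rw [hc, smul_eq_mul] at h
  have h' : ∑ i ∈ s, (tiltedHeight n i : ℝ) ≤ k * n := by exact_mod_cast h
  gcongr

lemma ratioR_succ_bounds {n k : ℕ} (hk : k < n) :
    ratioR n k * (1 - k / n) ≤ ratioR n (k + 1) ∧ ratioR n (k + 1) ≤ ratioR n k := by
  have hn : (0 : ℝ) < n := by exact_mod_cast Nat.zero_lt_of_lt hk
  have hkn : (k : ℝ) < n := by exact_mod_cast hk
  have hk0 : (0 : ℝ) ≤ k := Nat.cast_nonneg k
  have hlt : k < n ^ 2 := hk.trans_le (Nat.le_self_pow two_ne_zero n)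
  have hD : (0 : ℝ) < (n : ℝ) ^ 2 - k := by
    have : (k : ℝ) < (n : ℝ) ^ 2 := by exact_mod_cast hlt
    linarith
  have hC : (0 : ℝ) < (n ^ 2).choose k := by exact_mod_cast Nat.choose_pos hlt.le
  have hchoose : ((n ^ 2).choose (k + 1) : ℝ) * (k + 1) =
      (n ^ 2).choose k * ((n : ℝ) ^ 2 - k) := by
    have h := congrArg (Nat.cast : ℕ → ℝ) (Nat.choose_succ_right_eq (n ^ 2) k)
    push_cast [Nat.cast_sub hlt.le] at h
    exact h
  have hR : ratioR n (k + 1) = ((k : ℝ) + 1) * sameHeightFree n (k + 1) /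
      ((n ^ 2).choose k * ((n : ℝ) ^ 2 - k)) := by
    rw [← hchoose, mul_comm ((k : ℝ) + 1), ratioR, mul_div_mul_right _ _ (by positivity)]
  have hS : (0 : ℝ) ≤ sameHeightFree n k := Nat.cast_nonneg _
  rw [hR, ratioR]
  constructor
  · rw [le_div_iff₀ (by positivity)]
    have h0 : (sameHeightFree n k : ℝ) / (n ^ 2).choose k * (1 - k / n) *
        ((n ^ 2).choose k * ((n : ℝ) ^ 2 - k)) =
        (1 - k / n) * ((n : ℝ) ^ 2 - k) * sameHeightFree n k := by
      field_simp
    rw [h0]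
    refine (?_ : _ ≤ _).trans (le_sameHeightFree_succ n k)
    · refine mul_le_mul_of_nonneg_right ?_ hS
      have h1 : (0 : ℝ) ≤ 1 - k / n := by
        rw [sub_nonneg, div_le_one hn]; exact hkn.le
      calc (1 - (k : ℝ) / n) * ((n : ℝ) ^ 2 - k) ≤ (1 - k / n) * (n : ℝ) ^ 2 :=
            mul_le_mul_of_nonneg_left (by linarith) h1
        _ = (n : ℝ) ^ 2 - k * n := by field_simp
  · rw [div_le_div_iff₀ (by positivity) hC]
    have := mul_le_mul_of_nonneg_right (sameHeightFree_succ_le n k) hC.le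
    linarith

lemma tendsto_ratioR (k : ℕ) :
    Filter.Tendsto (fun n : ℕ => ratioR n k) Filter.atTop (nhds 1) := by
  induction k with
  | zero => simp [ratioR, sameHeightFree]
  | succ k ih =>
    have h0 : Filter.Tendsto (fun n : ℕ => ratioR n k * (1 - (k : ℝ) / n))
        Filter.atTop (nhds 1) := by
      simpa using ih.mul (tendsto_const_nhds.sub (tendsto_const_div_atTop_nhds_zero_nat (k : ℝ)))
    refine tendsto_of_tendsto_of_tendsto_of_le_of_le' h0 ih ?_ ?_
    · filter_upwards [Filter.eventually_gt_atTop k] with n hn using (ratioR_succ_bounds hn).1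
    · filter_upwards [Filter.eventually_gt_atTop k] with n hn using (ratioR_succ_bounds hn).2

/-- For every `ε > 0` and every `K ∈ ℕ`, there exists an integer `N > K` such that
`1 - R_{n,k} ≤ ε` for all `n ≥ N` and all `k ≤ K`; in particular, for every fixed `k`,
`lim_{n → ∞} R_{n,k} = 1`. -/
theorem ratioR_tendsto_one :
    (∀ ε : ℝ, 0 < ε → ∀ K : ℕ, ∃ N : ℕ, K < N ∧
      ∀ n, N ≤ n → ∀ k, k ≤ K → 1 - ratioR n k ≤ ε) ∧
    (∀ k : ℕ, Filter.Tendsto (fun n : ℕ => ratioR n k) Filter.atTop (nhds 1)) := by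
  refine ⟨fun ε hε K => ?_, tendsto_ratioR⟩
  have h : ∀ᶠ n : ℕ in Filter.atTop, ∀ k ∈ Set.Iic K, 1 - ratioR n k ≤ ε := by
    rw [Filter.eventually_all_finite (Set.finite_Iic K)]
    intro k _
    filter_upwards [(tendsto_ratioR k).eventually_const_lt (show 1 - ε < 1 by linarith)] with n hn
    linarith
  obtain ⟨N, hN⟩ := Filter.eventually_atTop.1 h
  exact ⟨max N (K + 1), by omega, fun n hn k hk => hN n (le_trans (le_max_left _ _) hn) k hk⟩
end

section
/- Let 𝒞 be a category, (H, G, τ, α) a crossed module, and let F, F' : 𝒞 → BG be functors into the one-object category BG associated to G. Suppose given a function g from the objects of 𝒞 to G and a function h from the morphisms of 𝒞 to H such that for every morphism γ : x → y of 𝒞 one has τ(h(γ)) · g(y) · F(γ) = F'(γ) · g(x). Then the assignment F''(γ) := g(y) · F(γ) · g(x)⁻¹ (for γ : x → y) defines a functor F'' : 𝒞 → BG, and for every morphism γ : x → y one has F''(γ) · g(x) = g(y) · F(γ) and τ(h(γ)) · F''(γ) = F'(γ); that is, the gauge transformation (g, h) : F ⇒ F' decomposes as the thin gauge transformation (g,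 e) : F ⇒ F'' followed by the fat gauge transformation (e, h) : F'' ⇒ F'. -/
/-!
Multiplying each `F(γ)` by `g y` on the left and `(g x)⁻¹` on the right preserves composition,
because the factors `(g y)⁻¹` and `g y` at an intermediate object cancel; this gives `F''`, and the
thin relation is then a cancellation of `(g x)⁻¹ * g x`. Moving `g x` to the left-hand side of
`τ (h γ) * g y * F(γ) = F'(γ) * g x` gives the fat relation.
-/

open CategoryTheory

/-- Decomposition of a gauge transformation `(g, h) : F ⇒ F'` between functors into `BG`
into a thin gauge transformation `(g, e) : F ⇒ F''` followed by a fat gauge transformation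
`(e, h) : F'' ⇒ F'`, where `F''(γ) := g(y) · F(γ) · g(x)⁻¹`. -/
theorem gauge_transformation_decomposition
    {C : Type*} [Category C] {G H : Type*} [Group G] [Group H]
    (τ : H →* G) (α : G →* MulAut H)
    (peiffer : ∀ h h' : H, α (τ h) h' = h * h' * h⁻¹)
    (equivariance : ∀ (g : G) (h : H), τ (α g h) = g * τ h * g⁻¹)
    (F F' : C ⥤ SingleObj G)
    (g : C → G) (h : ∀ {x y : C}, (x ⟶ y) → H)
    (hcond : ∀ {x y : C} (γ : x ⟶ y),
      τ (h γ) * g y * (F.map γ : G) = (F'.map γ : G) * g x) :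
    ∃ F'' : C ⥤ SingleObj G,
      (∀ {x y : C} (γ : x ⟶ y), (F''.map γ : G) = g y * (F.map γ : G) * (g x)⁻¹) ∧
      (∀ {x y : C} (γ : x ⟶ y), (F''.map γ : G) * g x = g y * (F.map γ : G)) ∧
      (∀ {x y : C} (γ : x ⟶ y), τ (h γ) * (F''.map γ : G) = (F'.map γ : G)) := by
  have hid : ∀ x : C, (F.map (𝟙 x) : G) = 1 := fun x => F.map_id x
  -- Composition in `SingleObj G` is multiplication in the reverse order.
  have hcomp : ∀ {x y z : C} (γ : x ⟶ y) (δ : y ⟶ z),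
      (F.map (γ ≫ δ) : G) = (F.map δ : G) * (F.map γ : G) := fun γ δ => F.map_comp γ δ
  refine ⟨{ obj := fun _ => SingleObj.star G
            map := fun {x y} γ => (g y * (F.map γ : G) * (g x)⁻¹ : G)
            map_id := fun x => ?_
            map_comp := fun {x y z} γ δ => ?_ }, fun γ => rfl, fun γ => ?_, fun {x y} γ => ?_⟩
  · change g x * (F.map (𝟙 x) : G) * (g x)⁻¹ = (1 : G)
    rw [hid, mul_one, mul_inv_cancel]
  · change g z * (F.map (γ ≫ δ) : G) * (g x)⁻¹ =
      (g z * (F.map δ : G) * (g y)⁻¹) * (g y * (F.map γ : G) * (g x)⁻¹)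
    rw [hcomp]
    group
  · exact inv_mul_cancel_right _ _
  · change τ (h γ) * (g y * (F.map γ : G) * (g x)⁻¹) = (F'.map γ : G)
    rw [← mul_assoc, ← mul_assoc]
    exact mul_inv_eq_of_eq_mul (hcond γ)
end

section
/- Let E be a Banach space, let A : ℝ → (E →L E) be a continuous family of continuous linear operators, and let ψ₀ ∈ E. For each t ≥ 0 the series ψ(t) := ψ₀ + ∑_{k=1}^∞ (−1)^k ∫₀^t ∫₀^{t_k} ⋯ ∫₀^{t_2} A(t_k)·A(t_{k−1})⋯A(t_1)·ψ₀ dt_1 ⋯ dt_k (iterated integral over the simplex {0 ≤ t_1 ≤ ⋯ ≤ t_k ≤ t}) converges absolutely, and the resulting function ψ satisfies ψ(0) = ψ₀ and ψ'(t) = −A(t)·ψ(t) for all t ≥ 0; that is, the path-ordered (Dyson) series solves the initial value problem dψ/dt = −A(t)·ψ(t), ψ(0) = ψ₀. -/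
/-!
Everything is estimated on a bounded interval `|t| < R`, where the continuous family `A` satisfies
`‖A t‖ ≤ M`. By induction the `k`-th term is at most `‖ψ₀‖ (M |t|)^k / k!`, because the ordered
simplex has volume `|t|^k / k!`; this is dominated by an exponential series.
By the fundamental theorem of calculus the derivative of the term of order `k + 1` is `A t` applied
to the term of order `k`, so the differentiated series obeys a uniform bound of the same kind.
Termwise differentiation (`hasDerivAt_tsum_of_isPreconnected`) is then legitimate, and since `A t`
is continuous and linear it can be pulled out of the differentiated series, giving `-A t (ψ t)`.
Working on an interval around `0` gives two-sided derivatives, also at `t = 0`.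
-/

open MeasureTheory intervalIntegral

/-- The `k`-th term of the path-ordered (Dyson) series: the iterated integral
`∫₀ᵗ ∫₀^{t_k} ⋯ ∫₀^{t_2} A(t_k) A(t_{k−1}) ⋯ A(t_1) ψ₀ dt_1 ⋯ dt_k`
over the ordered simplex `{0 ≤ t_1 ≤ ⋯ ≤ t_k ≤ t}`, written recursively. -/
noncomputable def dysonTerm {E : Type*} [NormedAddCommGroup E] [NormedSpace ℝ E]
    (A : ℝ → E →L[ℝ] E) (ψ₀ : E) : ℕ → ℝ → E
  | 0, _ => ψ₀
  | k + 1, t => ∫ s in (0 : ℝ)..t, A s (dysonTerm A ψ₀ k s)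

/-- The Dyson series `ψ(t) = ψ₀ + ∑_{k≥1} (−1)^k (k-fold ordered iterated integral)`. -/
noncomputable def dysonSeries {E : Type*} [NormedAddCommGroup E] [NormedSpace ℝ E]
    (A : ℝ → E →L[ℝ] E) (ψ₀ : E) : ℝ → E :=
  fun t => ∑' k : ℕ, ((-1 : ℝ) ^ k) • dysonTerm A ψ₀ k t

theorem continuous_dysonTerm {E : Type*} [NormedAddCommGroup E] [NormedSpace ℝ E]
    {A : ℝ → E →L[ℝ] E} (hA : Continuous A) (ψ₀ : E) (k : ℕ) :
    Continuous (dysonTerm A ψ₀ k) := by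
  induction k with
  | zero => exact continuous_const
  | succ k ih =>
    exact intervalIntegral.continuous_primitive
      (fun a b => (hA.clm_apply ih).intervalIntegrable a b) 0

theorem hasDerivAt_dysonTerm_succ {E : Type*} [NormedAddCommGroup E] [NormedSpace ℝ E]
    [CompleteSpace E] {A : ℝ → E →L[ℝ] E} (hA : Continuous A) (ψ₀ : E) (k : ℕ) (t : ℝ) :
    HasDerivAt (dysonTerm A ψ₀ (k + 1)) (A t (dysonTerm A ψ₀ k t)) t :=
  (hA.clm_apply (continuous_dysonTerm hA ψ₀ k)).integral_hasStrictDerivAt 0 t |>.hasDerivAt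

/-- Each integration turns `|s| ^ k / k!` into `|t| ^ (k + 1) / (k + 1)!`, for either sign
of `t`. -/
theorem norm_dysonTerm_le {E : Type*} [NormedAddCommGroup E] [NormedSpace ℝ E]
    {A : ℝ → E →L[ℝ] E} (hA : Continuous A) (ψ₀ : E) {R M : ℝ}
    (hM : ∀ s, |s| ≤ R → ‖A s‖ ≤ M) (k : ℕ) {t : ℝ} (ht : |t| ≤ R) :
    ‖dysonTerm A ψ₀ k t‖ ≤ ‖ψ₀‖ * ((M * |t|) ^ k / k.factorial) := by
  have hM0 : 0 ≤ M := (norm_nonneg _).trans (hM t ht)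
  induction k generalizing t with
  | zero => simp [dysonTerm]
  | succ k ih =>
    have hcont := hA.clm_apply (continuous_dysonTerm hA ψ₀ k)
    calc ‖dysonTerm A ψ₀ (k + 1) t‖
        ≤ ∫ s in Set.uIoc 0 t, ‖A s (dysonTerm A ψ₀ k s)‖ :=
          intervalIntegral.norm_integral_le_integral_norm_uIoc
      _ ≤ ∫ s in Set.uIoc 0 t, ‖ψ₀‖ * M ^ (k + 1) / k.factorial * |s - 0| ^ k := by
          refine setIntegral_mono_on ?_ ?_ measurableSet_uIoc fun s hs => ?_
          · exact (hcont.norm.intervalIntegrable 0 t).def'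
          · exact ((by fun_prop : Continuous fun s : ℝ =>
              ‖ψ₀‖ * M ^ (k + 1) / k.factorial * |s - 0| ^ k).intervalIntegrable 0 t).def'
          · have hsR : |s| ≤ R := by
              have := Set.abs_sub_left_of_mem_uIcc (Set.uIoc_subset_uIcc hs)
              simp only [sub_zero] at this
              exact this.trans ht
            calc ‖A s (dysonTerm A ψ₀ k s)‖
                ≤ M * (‖ψ₀‖ * ((M * |s|) ^ k / k.factorial)) :=
                  (A s).le_of_opNorm_le_of_le (hM s hsR) (ih hsR)
              _ = ‖ψ₀‖ * M ^ (k + 1) / k.factorial * |s - 0| ^ k := by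
                  rw [sub_zero, mul_pow]; ring
      _ = ‖ψ₀‖ * ((M * |t|) ^ (k + 1) / (k + 1).factorial) := by
          rw [MeasureTheory.integral_const_mul, integral_pow_abs_sub_uIoc, sub_zero,
            Nat.factorial_succ, mul_pow]
          push_cast
          field_simp

/-- Continuity on a compact interval yields the operator norm bound used on `|s| ≤ R`. -/
theorem exists_norm_le_of_abs_le {E : Type*} [NormedAddCommGroup E] [NormedSpace ℝ E]
    {A : ℝ → E →L[ℝ] E} (hA : Continuous A) (R : ℝ) :
    ∃ M, ∀ s, |s| ≤ R → ‖A s‖ ≤ M := by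
  obtain ⟨M, hM⟩ := (isCompact_Icc (a := -R) (b := R)).exists_bound_of_continuousOn hA.continuousOn
  exact ⟨M, fun s hs => hM s (abs_le.mp hs)⟩

theorem summable_norm_dysonTerm {E : Type*} [NormedAddCommGroup E] [NormedSpace ℝ E]
    {A : ℝ → E →L[ℝ] E} (hA : Continuous A) (ψ₀ : E) (t : ℝ) :
    Summable fun k : ℕ => ‖dysonTerm A ψ₀ k t‖ := by
  obtain ⟨M, hM⟩ := exists_norm_le_of_abs_le hA |t|
  exact Summable.of_nonneg_of_le (fun _ => norm_nonneg _)
    (fun k => norm_dysonTerm_le hA ψ₀ hM k le_rfl)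
    ((Real.summable_pow_div_factorial (M * |t|)).mul_left ‖ψ₀‖)

theorem summable_dysonTerm {E : Type*} [NormedAddCommGroup E] [NormedSpace ℝ E]
    [CompleteSpace E] {A : ℝ → E →L[ℝ] E} (hA : Continuous A) (ψ₀ : E) (t : ℝ) :
    Summable fun k : ℕ => ((-1 : ℝ) ^ k) • dysonTerm A ψ₀ k t :=
  .of_norm (by simpa [norm_smul] using summable_norm_dysonTerm hA ψ₀ t)

/-- Splitting off the constant term leaves a series all of whose terms are primitives. -/
theorem dysonSeries_eq_add_tsum {E : Type*} [NormedAddCommGroup E] [NormedSpace ℝ E]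
    [CompleteSpace E] {A : ℝ → E →L[ℝ] E} (hA : Continuous A) (ψ₀ : E) (t : ℝ) :
    dysonSeries A ψ₀ t = ψ₀ + ∑' k : ℕ, ((-1 : ℝ) ^ (k + 1)) • dysonTerm A ψ₀ (k + 1) t := by
  rw [dysonSeries, (summable_dysonTerm hA ψ₀ t).tsum_eq_zero_add]
  simp [dysonTerm]

theorem hasDerivAt_dysonSeries {E : Type*} [NormedAddCommGroup E] [NormedSpace ℝ E]
    [CompleteSpace E] {A : ℝ → E →L[ℝ] E} (hA : Continuous A) (ψ₀ : E) (t : ℝ) :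
    HasDerivAt (dysonSeries A ψ₀) (-(A t (dysonSeries A ψ₀ t))) t := by
  set R := |t| + 1
  obtain ⟨M, hM⟩ := exists_norm_le_of_abs_le hA R
  have hM0 : 0 ≤ M := (norm_nonneg _).trans (hM t (by simp [R]))
  have htR : t ∈ Metric.ball (0 : ℝ) R := by simp [R]
  have hderiv := hasDerivAt_tsum_of_isPreconnected
    (g := fun k s => ((-1 : ℝ) ^ (k + 1)) • dysonTerm A ψ₀ (k + 1) s)
    (g' := fun k s => ((-1 : ℝ) ^ (k + 1)) • A s (dysonTerm A ψ₀ k s))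
    (u := fun k => M * (‖ψ₀‖ * ((M * R) ^ k / k.factorial)))
    (((Real.summable_pow_div_factorial (M * R)).mul_left ‖ψ₀‖).mul_left M)
    Metric.isOpen_ball (convex_ball (0 : ℝ) R).isPreconnected
    (fun k s _ => (hasDerivAt_dysonTerm_succ hA ψ₀ k s).const_smul _)
    (fun k s hs => by
      have hsR : |s| ≤ R := by simpa using (mem_ball_zero_iff.mp hs).le
      have hk : ‖dysonTerm A ψ₀ k s‖ ≤ ‖ψ₀‖ * ((M * R) ^ k / k.factorial) :=
        (norm_dysonTerm_le hA ψ₀ hM k hsR).trans (by gcongr)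
      simpa [norm_smul] using (A s).le_of_opNorm_le_of_le (hM s hsR) hk)
    htR ((summable_nat_add_iff 1).mpr (summable_dysonTerm hA ψ₀ t)) htR
  have hsum : ∑' k : ℕ, ((-1 : ℝ) ^ (k + 1)) • A t (dysonTerm A ψ₀ k t)
      = -(A t (dysonSeries A ψ₀ t)) := by
    rw [dysonSeries, (A t).map_tsum (summable_dysonTerm hA ψ₀ t), ← tsum_neg]
    exact tsum_congr fun k => by simp [pow_succ]
  rw [← hsum, funext (dysonSeries_eq_add_tsum hA ψ₀)]
  exact hderiv.const_add ψ₀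

/-- For a continuous family `A` of continuous linear operators on a Banach space `E` and
`ψ₀ ∈ E`, the Dyson series converges absolutely for every `t ≥ 0`, and the resulting
function `ψ` satisfies `ψ(0) = ψ₀` and `ψ'(t) = −A(t) ψ(t)` for all `t ≥ 0`. -/
theorem dysonSeries_solves_ivp {E : Type*} [NormedAddCommGroup E] [NormedSpace ℝ E]
    [CompleteSpace E] (A : ℝ → E →L[ℝ] E) (hA : Continuous A) (ψ₀ : E) :
    (∀ t : ℝ, 0 ≤ t → Summable fun k : ℕ => ‖dysonTerm A ψ₀ k t‖) ∧
    dysonSeries A ψ₀ 0 = ψ₀ ∧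
    ∀ t : ℝ, 0 ≤ t →
      HasDerivAt (dysonSeries A ψ₀) (-(A t (dysonSeries A ψ₀ t))) t := by
  refine ⟨fun t _ => summable_norm_dysonTerm hA ψ₀ t, ?_, fun t _ => hasDerivAt_dysonSeries hA ψ₀ t⟩
  rw [dysonSeries_eq_add_tsum hA]
  simp [dysonTerm]
end
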